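/- For every large enough integer k the following holds: if T is a path on k vertices, then for every large enough integer n with k dividing n, in the unbiased Waiter-Client game on the edge set of K_n whose winning sets are the T-factors of K_n, Waiter can win in exactly ((k−1)/k)·n rounds; that is, τ_WC(F_{n,T-fac}, 1) = ((k−1)/k)·n. -/

import Mathlib

open Finset

/-- `WaiterWins board b win t Cl W` means: starting from the position where Client owns the
elements of `Cl` and Waiter owns the elements of `W`, Waiter can force that within the next `t`
rounds of the `b`-biased Waiter-Client game on the board `board` a position is reached in which
the predicate `win` holds of (Client's elements, Waiter's elements).  In each round Waiter offers
`b+1` previously unclaimed board elements (or all remaining unclaimed elements, if fewer than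
`b+1` remain); Client claims exactly one of them, the rest go to Waiter. -/
def WaiterWins {X : Type*} [DecidableEq X] (board : Finset X) (b : ℕ)
    (win : Finset X → Finset X → Prop) :
    ℕ → Finset X → Finset X → Prop
  | 0, Cl, W => win Cl W
  | (t+1), Cl, W => win Cl W ∨
      ∃ O : Finset X, O.Nonempty ∧ O ⊆ board \ (Cl ∪ W) ∧
        O.card = min (b + 1) ((board \ (Cl ∪ W)).card) ∧
        ∀ x ∈ O, WaiterWins board b win t (insert x Cl) (W ∪ O.erase x)

/-- `tauWC board F b` : the smallest number of rounds within which Waiter can force Client's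
elements to contain some member of the winning family `F`, in the `b`-biased Waiter-Client game
on the board `board`. -/
noncomputable def tauWC {X : Type*} [DecidableEq X] (board : Finset X)
    (F : Set (Finset X)) (b : ℕ) : ℕ :=
  sInf {t | WaiterWins board b (fun Cl _ => ∃ A ∈ F, A ⊆ Cl) t ∅ ∅}

/-- The edge set of the complete graph on `Fin n`. -/
def Kedges (n : ℕ) : Finset (Sym2 (Fin n)) :=
  Finset.univ.filter (fun e => ¬ e.IsDiag)

/-- The family of edge sets of `H`-factors of `K_n`, where `H` is the graph on `Fin k` with
edge set `E`: vertex-disjoint unions of copies of `H` covering all `n` vertices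
(each of the `n/k` copies is given by an embedding `g i`, and the copies partition `Fin n`). -/
def factorFamily (k n : ℕ) (E : Set (Sym2 (Fin k))) : Set (Finset (Sym2 (Fin n))) :=
  {F | ∃ g : Fin (n / k) → Fin k → Fin n,
    (∀ v : Fin n, ∃! p : Fin (n / k) × Fin k, g p.1 p.2 = v) ∧
    (F : Set (Sym2 (Fin n))) = ⋃ i : Fin (n / k), Sym2.map (g i) '' E}

/-- The edge set of the path `0 - 1 - ⋯ - (k−1)` on the vertex set `Fin k`. -/
def pathEdges (k : ℕ) : Set (Sym2 (Fin k)) :=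
  {e | ∃ i j : Fin k, e = s(i, j) ∧ (j : ℕ) = (i : ℕ) + 1}


theorem wc_step {n t : ℕ} {win : Finset (Sym2 (Fin n)) → Finset (Sym2 (Fin n)) → Prop}
    {Cl W : Finset (Sym2 (Fin n))} {a b c d : Fin n}
    (hab : a ≠ b) (hcd : c ≠ d) (hne : s(a,b) ≠ s(c,d))
    (h1 : s(a,b) ∉ Cl ∧ s(a,b) ∉ W) (h2 : s(c,d) ∉ Cl ∧ s(c,d) ∉ W)
    (w1 : WaiterWins (Kedges n) 1 win t (insert s(a,b) Cl) (insert s(c,d) W))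
    (w2 : WaiterWins (Kedges n) 1 win t (insert s(c,d) Cl) (insert s(a,b) W)) :
    WaiterWins (Kedges n) 1 win (t+1) Cl W := by
  right
  have hsub : ({s(a,b), s(c,d)} : Finset (Sym2 (Fin n))) ⊆ Kedges n \ (Cl ∪ W) := by
    intro e he
    simp only [Finset.mem_insert, Finset.mem_singleton] at he
    rcases he with rfl | rfl <;> simp [Kedges, *]
  refine ⟨{s(a,b), s(c,d)}, by simp, hsub, ?_, ?_⟩
  · have := Finset.card_le_card hsub
    rw [Finset.card_pair hne] at this ⊢
    omega
  · intro e he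
    simp only [Finset.mem_insert, Finset.mem_singleton] at he
    rcases he with rfl | rfl
    · convert w1 using 1
      ext e; simp only [Finset.mem_union, Finset.mem_erase, Finset.mem_insert, Finset.mem_singleton]
      grind
    · convert w2 using 1
      ext e; simp only [Finset.mem_union, Finset.mem_erase, Finset.mem_insert, Finset.mem_singleton]
      grind

theorem chain_mono {n : ℕ} {Cl Cl' : Finset (Sym2 (Fin n))} (h : Cl ⊆ Cl') {p : List (Fin n)}
    (hp : p.IsChain (fun a b => s(a,b) ∈ Cl)) : p.IsChain (fun a b => s(a,b) ∈ Cl') :=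
  hp.imp (fun _ _ hh => h hh)

theorem wc_grow {n k t : ℕ} {win : Finset (Sym2 (Fin n)) → Finset (Sym2 (Fin n)) → Prop} (s : ℕ) :
    ∀ (Cl W : Finset (Sym2 (Fin n))) (R : Finset (Fin n)) (h l : Fin n) (q : List (Fin n)),
    s ≤ R.card → q.length + 2 + s = k → h ≠ l → h ∉ R → l ∉ R →
    (h :: (q ++ [l])).IsChain (fun a b => s(a,b) ∈ Cl) →
    (∀ a ∈ insert h (insert l R), ∀ b ∈ R, s(a,b) ∉ Cl ∧ s(a,b) ∉ W) →
    (∀ (Cl' W' : Finset (Sym2 (Fin n))) (R' : Finset (Fin n)) (p : List (Fin n)),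
      p.length = k → Cl ⊆ Cl' → p.IsChain (fun a b => s(a,b) ∈ Cl') →
      (∀ v, v ∈ R ∨ v ∈ h :: (q ++ [l]) → v ∈ R' ∨ v ∈ p) → R'.card + s = R.card →
      (∀ a ∈ R', ∀ b ∈ R', s(a,b) ∉ Cl' ∧ s(a,b) ∉ W') →
      WaiterWins (Kedges n) 1 win t Cl' W') →
    WaiterWins (Kedges n) 1 win (t + s) Cl W := by
  induction s with
  | zero =>
    intro Cl W R h l q hs hk hhl hh hl hc hu hcont
    exact hcont Cl W R (h :: (q ++ [l])) (by simp; omega) (Finset.Subset.refl _) hc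
      (fun v hv => hv) rfl (fun a ha b hb => hu a (by simp [ha]) b hb)
  | succ s ih =>
    intro Cl W R h l q hs hk hhl hh hl hc hu hcont
    obtain ⟨v, hv⟩ := Finset.card_pos.mp (by omega : 0 < R.card)
    have hvh : v ≠ h := by rintro rfl; exact hh hv
    have hvl : v ≠ l := by rintro rfl; exact hl hv
    have hcard : (R.erase v).card + 1 = R.card := Finset.card_erase_add_one hv
    rw [← Nat.add_assoc]
    refine wc_step (a := v) (b := h) (c := l) (d := v) hvh hvl.symm (by rw [Ne, Sym2.eq_iff]; grind) ?_ ?_ ?_ ?_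
    · rw [Sym2.eq_swap]; exact hu h (by simp) v hv
    · exact hu l (by simp) v hv
    · refine ih _ _ (R.erase v) v l (h :: q) (by omega) (by simp; omega) hvl (by simp)
        (by simp [hl]) ?_ ?_ ?_
      · exact List.IsChain.cons_cons (by simp) (chain_mono (Finset.subset_insert _ _) hc)
      · intro a ha b hb
        have := hu a (by grind) b (by grind)
        grind
      · intro Cl' W' R' p h1 h2 h3 h4 h5 h6
        refine hcont Cl' W' R' p h1 ((Finset.subset_insert _ _).trans h2) h3 ?_ (by omega) h6
        intro w hw
        exact h4 w (by grind)
    · refine ih _ _ (R.erase v) h v (q ++ [l]) (by omega) (by simp; omega) hvh.symm (by simp [hh])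
        (by simp) ?_ ?_ ?_
      · have hc' := chain_mono (Finset.subset_insert s(l,v) _) hc
        rw [← List.cons_append]
        refine List.IsChain.append hc' (by simp) ?_
        intro x hx y hy
        rw [← List.cons_append, List.getLast?_concat] at hx
        simp at hx hy
        subst hx; subst hy; simp
      · intro a ha b hb
        have := hu a (by grind) b (by grind)
        grind
      · intro Cl' W' R' p h1 h2 h3 h4 h5 h6
        refine hcont Cl' W' R' p h1 ((Finset.subset_insert _ _).trans h2) h3 ?_ (by omega) h6
        intro w hw
        exact h4 w (by grind)

/-- continuation hypothesis after a block -/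
def BlkCont (n k t : ℕ) (win : Finset (Sym2 (Fin n)) → Finset (Sym2 (Fin n)) → Prop)
    (Cl : Finset (Sym2 (Fin n))) (R : Finset (Fin n)) : Prop :=
  ∀ (Cl' W' : Finset (Sym2 (Fin n))) (R' : Finset (Fin n)) (p : List (Fin n)),
      p.length = k → Cl ⊆ Cl' → p.IsChain (fun a b => s(a,b) ∈ Cl') →
      (∀ v, v ∈ R → v ∈ R' ∨ v ∈ p) → R'.card + k = R.card →
      (∀ a ∈ R', ∀ b ∈ R', s(a,b) ∉ Cl' ∧ s(a,b) ∉ W') →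
      WaiterWins (Kedges n) 1 win t Cl' W'

theorem BlkCont.mono {n k t : ℕ} {win : Finset (Sym2 (Fin n)) → Finset (Sym2 (Fin n)) → Prop}
    {Cl Cl₂ : Finset (Sym2 (Fin n))} {R : Finset (Fin n)} (h : BlkCont n k t win Cl R)
    (hs : Cl ⊆ Cl₂) : BlkCont n k t win Cl₂ R :=
  fun Cl' W' R' p h1 h2 => h Cl' W' R' p h1 (hs.trans h2)

/-- four-vertex path u a b x, all claimed edges inside R touch a or b -/
theorem wc_four {n k t : ℕ} {win : Finset (Sym2 (Fin n)) → Finset (Sym2 (Fin n)) → Prop}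
    {Cl W : Finset (Sym2 (Fin n))} {R : Finset (Fin n)} {u a b x : Fin n}
    (hk : 4 ≤ k) (hR : k ≤ R.card) (hu : u ∈ R) (ha : a ∈ R) (hb : b ∈ R) (hx : x ∈ R)
    (hnd : [u, a, b, x].Nodup)
    (hc : [u, a, b, x].IsChain (fun a b => s(a,b) ∈ Cl))
    (hcl : ∀ p ∈ R, ∀ q ∈ R, p ≠ a → p ≠ b → q ≠ a → q ≠ b → s(p,q) ∉ Cl ∧ s(p,q) ∉ W)
    (hcont : BlkCont n k t win Cl R) :
    WaiterWins (Kedges n) 1 win (t + (k - 4)) Cl W := by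
  have hc4 : (R \ {u, a, b, x}).card + 4 = R.card := by
    have h1 : ({u, a, b, x} : Finset (Fin n)) ⊆ R := by
      intro v; simp only [Finset.mem_insert, Finset.mem_singleton]; grind
    have h2 : ({u, a, b, x} : Finset (Fin n)).card = 4 := by
      have := List.toFinset_card_of_nodup hnd
      simpa using this
    have := Finset.card_sdiff_add_card_eq_card h1
    omega
  simp at hnd
  refine wc_grow (k := k) (k - 4) Cl W (R \ {u, a, b, x}) u x [a, b] (by omega) (by simp; omega)
    (by grind) (by simp) (by simp) hc ?_ ?_
  · intro p hp q hq
    simp only [Finset.mem_insert, Finset.mem_sdiff, Finset.mem_singleton] at hp hq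
    refine hcl p ?_ q ?_ ?_ ?_ ?_ ?_ <;> grind
  · intro Cl' W' R' p h1 h2 h3 h4 h5 h6
    refine hcont Cl' W' R' p h1 h2 h3 ?_ (by omega) h6
    intro v hv
    apply h4
    by_cases hh : v ∈ ({u, a, b, x} : Finset (Fin n))
    · right; simpa using hh
    · left; simp only [Finset.mem_sdiff]; exact ⟨hv, hh⟩

theorem wc_three {n k t : ℕ} {win : Finset (Sym2 (Fin n)) → Finset (Sym2 (Fin n)) → Prop}
    {Cl W : Finset (Sym2 (Fin n))} {R : Finset (Fin n)} {u w a b x : Fin n}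
    (hk : 4 ≤ k) (hR : k ≤ R.card) (hu : u ∈ R) (hw : w ∈ R) (ha : a ∈ R) (hb : b ∈ R) (hx : x ∈ R)
    (hnd : [u, w, a, b, x].Nodup)
    (hc : [a, b, x].IsChain (fun a b => s(a,b) ∈ Cl))
    (h1 : s(u,a) ∉ Cl ∧ s(u,a) ∉ W) (h2 : s(w,a) ∉ Cl ∧ s(w,a) ∉ W)
    (hcl : ∀ p ∈ R, ∀ q ∈ R, p ≠ a → p ≠ b → q ≠ a → q ≠ b → s(p,q) ∉ Cl ∧ s(p,q) ∉ W)
    (hcont : BlkCont n k t win Cl R) :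
    WaiterWins (Kedges n) 1 win (t + (k - 4) + 1) Cl W := by
  have hnd' := hnd
  simp at hnd'
  refine wc_step (a := u) (b := a) (c := w) (d := a) (by grind) (by grind) (by rw [Ne, Sym2.eq_iff]; grind) h1 h2 ?_ ?_
  · refine wc_four hk hR hu ha hb hx (by clear * - hnd'; simp; grind) ?_ ?_ (hcont.mono (Finset.subset_insert _ _))
    · exact List.IsChain.cons_cons (by simp) (chain_mono (Finset.subset_insert _ _) hc)
    · intro p hp q hq i1 i2 i3 i4
      have := hcl p hp q hq i1 i2 i3 i4
      clear hcl
      simp only [Finset.mem_insert, Sym2.eq_iff]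
      grind
  · refine wc_four hk hR hw ha hb hx (by clear * - hnd'; simp; grind) ?_ ?_ (hcont.mono (Finset.subset_insert _ _))
    · exact List.IsChain.cons_cons (by simp) (chain_mono (Finset.subset_insert _ _) hc)
    · intro p hp q hq i1 i2 i3 i4
      have := hcl p hp q hq i1 i2 i3 i4
      clear hcl
      simp only [Finset.mem_insert, Sym2.eq_iff]
      grind

theorem wc_two {n k t : ℕ} {win : Finset (Sym2 (Fin n)) → Finset (Sym2 (Fin n)) → Prop}
    {Cl W : Finset (Sym2 (Fin n))} {R : Finset (Fin n)} {u w a b x y c : Fin n}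
    (hk : 4 ≤ k) (hR : k ≤ R.card) (hu : u ∈ R) (hw : w ∈ R) (ha : a ∈ R) (hb : b ∈ R) (hx : x ∈ R)
    (hy : y ∈ R)
    (hnd : [u, w, a, b, x, y, c].Nodup)
    (hcl : ∀ p ∈ R, ∀ q ∈ R, s(p,q) ∉ Cl ∧ s(p,q) ∉ W)
    (hcont : BlkCont n k t win Cl R) :
    WaiterWins (Kedges n) 1 win (t + (k - 4) + 1 + 1) (insert s(a,b) Cl) (insert s(a,c) W) := by
  have hnd' := hnd
  simp at hnd'
  have key : ∀ p ∈ R, ∀ q ∈ R, ¬ (p = a ∧ (q = b ∨ q = c)) → ¬ (q = a ∧ (p = b ∨ p = c)) →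
      s(p,q) ∉ insert s(a,b) Cl ∧ s(p,q) ∉ insert s(a,c) W := by
    intro p hp q hq i1 i2
    have := hcl p hp q hq
    clear hcl
    simp only [Finset.mem_insert, Sym2.eq_iff]
    grind
  have hab : s(a,b) ∈ insert s(a,b) Cl := by simp
  have hcont' := hcont.mono (Finset.subset_insert s(a,b) Cl)
  generalize insert s(a,b) Cl = Cl at *
  generalize insert s(a,c) W = W at *
  refine wc_step (a := b) (b := x) (c := b) (d := y) (by grind) (by grind) (by rw [Ne, Sym2.eq_iff]; grind)
    (key b hb x hx (by clear * - hnd'; simp; grind) (by grind)) (key b hb y hy (by clear * - hnd'; simp; grind) (by grind)) ?_ ?_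
  · refine wc_three (u := u) (w := w) (a := a) (b := b) (x := x) hk hR hu hw ha hb hx (by clear * - hnd'; simp; grind)
      ?_ ?_ ?_ ?_ (hcont'.mono (Finset.subset_insert _ _))
    · simp [hab]
    · have := key u hu a ha (by grind) (by grind)
      clear hcl key hnd
      simp only [Finset.mem_insert, Sym2.eq_iff]
      grind
    · have := key w hw a ha (by grind) (by grind)
      clear hcl key hnd
      simp only [Finset.mem_insert, Sym2.eq_iff]
      grind
    · intro p hp q hq i1 i2 i3 i4
      have := key p hp q hq (by grind) (by grind)
      clear hcl key hnd
      simp only [Finset.mem_insert, Sym2.eq_iff]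
      grind
  · refine wc_three (u := u) (w := w) (a := a) (b := b) (x := y) hk hR hu hw ha hb hy (by clear * - hnd'; simp; grind)
      ?_ ?_ ?_ ?_ (hcont'.mono (Finset.subset_insert _ _))
    · simp [hab]
    · have := key u hu a ha (by grind) (by grind)
      clear hcl key hnd
      simp only [Finset.mem_insert, Sym2.eq_iff]
      grind
    · have := key w hw a ha (by grind) (by grind)
      clear hcl key hnd
      simp only [Finset.mem_insert, Sym2.eq_iff]
      grind
    · intro p hp q hq i1 i2 i3 i4
      have := key p hp q hq (by grind) (by grind)
      clear hcl key hnd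
      simp only [Finset.mem_insert, Sym2.eq_iff]
      grind

theorem wc_block {n k t : ℕ} {win : Finset (Sym2 (Fin n)) → Finset (Sym2 (Fin n)) → Prop}
    {Cl W : Finset (Sym2 (Fin n))} {R : Finset (Fin n)}
    (hk : 7 ≤ k) (hR : k ≤ R.card)
    (hcl : ∀ p ∈ R, ∀ q ∈ R, s(p,q) ∉ Cl ∧ s(p,q) ∉ W)
    (hcont : BlkCont n k t win Cl R) :
    WaiterWins (Kedges n) 1 win (t + (k - 1)) Cl W := by
  obtain ⟨S, hSR, hS⟩ := Finset.exists_subset_card_eq (by omega : 7 ≤ R.card)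
  have hl : S.toList.length = 7 := by simp [hS]
  have hnd : S.toList.Nodup := S.nodup_toList
  have hm : ∀ v ∈ S.toList, v ∈ R := fun v hv => hSR (by simpa using hv)
  generalize S.toList = L at hl hnd hm
  match L, hl with
  | [u, w, a, b, x, y, c], _ =>
    have hnd' := hnd
    simp at hnd'
    have e : t + (k - 1) = t + (k - 4) + 1 + 1 + 1 := by omega
    rw [e]
    have mu := hm u (by simp)
    have mw := hm w (by simp)
    have ma := hm a (by simp)
    have mb := hm b (by simp)
    have mx := hm x (by simp)
    have my := hm y (by simp)
    have mc := hm c (by simp)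
    refine wc_step (a := a) (b := b) (c := a) (d := c) (by grind) (by grind) (by rw [Ne, Sym2.eq_iff]; grind)
      (hcl a ma b mb) (hcl a ma c mc) ?_ ?_
    · exact wc_two (u := u) (w := w) (x := x) (y := y) (by omega) hR mu mw ma mb mx my (by clear * - hnd'; simp; grind) hcl hcont
    · exact wc_two (u := u) (w := w) (x := x) (y := y) (by omega) hR mu mw ma mc mx my (by clear * - hnd'; simp; grind) hcl hcont

theorem factor_of_lists {n k : ℕ} (hkn : k ∣ n) (Cl : Finset (Sym2 (Fin n)))
    (L : List (List (Fin n))) (hL : L.length = n / k) (hlen : ∀ p ∈ L, p.length = k)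
    (hch : ∀ p ∈ L, p.IsChain (fun a b => s(a,b) ∈ Cl))
    (hcov : ∀ v, ∃ p ∈ L, v ∈ p) :
    ∃ A ∈ factorFamily k n (pathEdges k), A ⊆ Cl := by
  have hl' : ∀ i : Fin (n / k), L[(i : ℕ)].length = k := fun i => hlen _ (List.getElem_mem _)
  let g : Fin (n / k) → Fin k → Fin n := fun i j =>
    (L[(i : ℕ)])[(j : ℕ)]'(by rw [hl' i]; exact j.2)
  have hsurj : Function.Surjective (fun p : Fin (n / k) × Fin k => g p.1 p.2) := by
    intro v
    obtain ⟨p, hp, hv⟩ := hcov v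
    obtain ⟨i, hi, rfl⟩ := List.getElem_of_mem hp
    obtain ⟨j, hj, rfl⟩ := List.getElem_of_mem hv
    exact ⟨(⟨i, by omega⟩, ⟨j, by rw [hlen _ hp] at hj; exact hj⟩), rfl⟩
  have hbij : Function.Bijective (fun p : Fin (n / k) × Fin k => g p.1 p.2) := by
    rw [Fintype.bijective_iff_surjective_and_card]
    exact ⟨hsurj, by simp [Nat.div_mul_cancel hkn]⟩
  classical
  refine ⟨(Set.toFinite (⋃ i : Fin (n / k), Sym2.map (g i) '' pathEdges k)).toFinset,
    ⟨g, fun v => hbij.existsUnique v, by simp⟩, ?_⟩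
  intro e he
  simp only [Set.Finite.mem_toFinset, Set.mem_iUnion, Set.mem_image] at he
  obtain ⟨i, e', ⟨j, j', rfl, hj⟩, rfl⟩ := he
  rw [Sym2.map_mk]
  have := (List.isChain_iff_getElem.mp (hch _ (List.getElem_mem (l := L) (n := (i : ℕ)) (by omega)))) (j : ℕ) (by rw [hl' i]; omega)
  simp only [g, hj]
  exact this

theorem wc_main {n k : ℕ} (hk : 7 ≤ k) (hkn : k ∣ n) (m : ℕ) :
    ∀ (Cl W : Finset (Sym2 (Fin n))) (R : Finset (Fin n)) (L : List (List (Fin n))),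
    R.card = k * m → L.length + m = n / k → (∀ p ∈ L, p.length = k) →
    (∀ p ∈ L, p.IsChain (fun a b => s(a,b) ∈ Cl)) →
    (∀ v, v ∈ R ∨ ∃ p ∈ L, v ∈ p) →
    (∀ p ∈ R, ∀ q ∈ R, s(p,q) ∉ Cl ∧ s(p,q) ∉ W) →
    WaiterWins (Kedges n) 1 (fun Cl _ => ∃ A ∈ factorFamily k n (pathEdges k), A ⊆ Cl)
      ((k - 1) * m) Cl W := by
  induction m with
  | zero =>
    intro Cl W R L hR hL hlen hch hcov hcl
    have : R = ∅ := Finset.card_eq_zero.mp (by simpa using hR)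
    subst this
    show ∃ A ∈ factorFamily k n (pathEdges k), A ⊆ Cl
    exact factor_of_lists hkn Cl L (by omega) hlen hch (by simpa using hcov)
  | succ m ih =>
    intro Cl W R L hR hL hlen hch hcov hcl
    rw [Nat.mul_succ] at hR ⊢
    refine wc_block hk (by omega) hcl ?_
    intro Cl' W' R' p h1 h2 h3 h4 h5 h6
    refine ih Cl' W' R' (p :: L) (by omega) (by simp; omega) ?_ ?_ ?_ h6
    · intro q hq
      rcases List.mem_cons.mp hq with rfl | hq
      · exact h1
      · exact hlen q hq
    · intro q hq
      rcases List.mem_cons.mp hq with rfl | hq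
      · exact h3
      · exact chain_mono h2 (hch q hq)
    · intro v
      rcases hcov v with hv | ⟨q, hq, hv⟩
      · rcases h4 v hv with h | h
        · exact Or.inl h
        · exact Or.inr ⟨p, by simp, h⟩
      · exact Or.inr ⟨q, by simp [hq], hv⟩

theorem wc_card {X : Type*} [DecidableEq X] {board : Finset X} {b : ℕ} {F : Set (Finset X)} (t : ℕ) :
    ∀ (Cl W : Finset X), WaiterWins board b (fun Cl _ => ∃ A ∈ F, A ⊆ Cl) t Cl W →
    ∃ A ∈ F, A.card ≤ Cl.card + t := by
  induction t with
  | zero =>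
    rintro Cl W ⟨A, hA, hs⟩
    exact ⟨A, hA, Finset.card_le_card hs⟩
  | succ t ih =>
    rintro Cl W (⟨A, hA, hs⟩ | ⟨O, ⟨x, hx⟩, -, -, h⟩)
    · exact ⟨A, hA, (Finset.card_le_card hs).trans (by omega)⟩
    · obtain ⟨A, hA, hc⟩ := ih _ _ (h x hx)
      have := Finset.card_insert_le x Cl
      exact ⟨A, hA, by omega⟩

theorem factor_card {n k : ℕ} {A : Finset (Sym2 (Fin n))}
    (hA : A ∈ factorFamily k n (pathEdges k)) : (k - 1) * (n / k) ≤ A.card := by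
  obtain ⟨g, hg, hA⟩ := hA
  have hinj : ∀ i j i' j', g i j = g i' j' → i = i' ∧ j = j' := by
    intro i j i' j' h
    have := (hg (g i' j')).unique (y₁ := (i, j)) (y₂ := (i', j')) h rfl
    simpa using this
  let f : Fin (n / k) × Fin (k - 1) → Sym2 (Fin n) := fun p =>
    s(g p.1 ⟨p.2, by omega⟩, g p.1 ⟨p.2 + 1, by omega⟩)
  have hf : Function.Injective f := by
    rintro ⟨i, j⟩ ⟨i', j'⟩ h
    simp only [f, Sym2.eq_iff] at h
    rcases h with ⟨h1, -⟩ | ⟨h1, h2⟩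
    · have := hinj _ _ _ _ h1
      simp only [Fin.mk.injEq] at this
      ext <;> simp [this]
    · have h1 := hinj _ _ _ _ h1
      have h2 := hinj _ _ _ _ h2
      simp only [Fin.mk.injEq] at h1 h2
      omega
  have hsub : Finset.univ.image f ⊆ A := by
    intro e he
    simp only [Finset.mem_image, Finset.mem_univ, true_and] at he
    obtain ⟨⟨i, j⟩, rfl⟩ := he
    rw [← Finset.mem_coe, hA]
    exact Set.mem_iUnion.mpr ⟨i, _, ⟨_, _, rfl, rfl⟩, rfl⟩
  have := Finset.card_le_card hsub
  rw [Finset.card_image_of_injective _ hf] at this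
  simp only [Finset.card_univ, Fintype.card_prod, Fintype.card_fin] at this
  rwa [mul_comm]

/-- For every large enough `k`, if `T` is a path on `k` vertices, then for every large enough
`n` divisible by `k`, in the unbiased Waiter-Client game on `K_n` whose winning sets are the
`T`-factors of `K_n`, Waiter wins in exactly `((k−1)/k)·n` rounds. -/
theorem WC_path_factor :
    ∃ k₀ : ℕ, ∀ k : ℕ, k₀ ≤ k →
      ∃ n₀ : ℕ, ∀ n : ℕ, n₀ ≤ n → k ∣ n →
        tauWC (Kedges n) (factorFamily k n (pathEdges k)) 1 = (k - 1) * (n / k) := by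
  refine ⟨7, fun k hk => ⟨0, fun n _ hkn => ?_⟩⟩
  have hw : (k - 1) * (n / k) ∈ {t | WaiterWins (Kedges n) 1
      (fun Cl _ => ∃ A ∈ factorFamily k n (pathEdges k), A ⊆ Cl) t ∅ ∅} :=
    wc_main hk hkn (n / k) ∅ ∅ Finset.univ [] (by simp [Nat.mul_div_cancel' hkn]) (by simp)
      (by simp) (by simp) (by simp) (by simp)
  apply le_antisymm
  · exact Nat.sInf_le hw
  · refine le_csInf ⟨_, hw⟩ ?_
    intro t ht
    obtain ⟨A, hA, hc⟩ := wc_card t ∅ ∅ ht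
    have := factor_card hA
    simp at hc
    omega
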